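/- (Main theorem.) If the persistent connectivity assumption holds and the reciprocal interaction weights diverge slowly (𝐫(t) is finite for all t ≥ 0 and Σ_{p∈ℕ} 𝐫(t_p)^{−⌊n/2⌋} = +∞), then the trajectory reaches a consensus: all limits lim_{t→∞} x_i(t) exist and are equal, i.e., Δ_N(t) → 0 as t → ∞ and all x_i converge to a common value. -/

import Mathlib

/-!
The minimum of the positions never decreases and the maximum never increases, so it is enough to
show that the diameter contracts along the times `t_p` by factors `1 - C 𝐫(t_{p+1})^{-⌊n/2⌋}`
with `C > 0` depending only on `n`; since the sum of `𝐫(t_p)^{-⌊n/2⌋}` diverges, the diameter then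
tends to `0`.

Fix a block `[t_p, t_{p+1}]` and put `K = 𝐫(t_{p+1}) ≥ 1`. Throughout the block, the influence of
any group on its complement is at most `K` times the reverse influence (`cutBalanced_rbold`).
For positions sorted as `y₀ ≤ … ≤ y_{n-1}`, an Abel summation shows that this makes
`∑_{i ≤ m} K⁻ⁱ yᵢ` nondecreasing in time, with growth rate at least `K⁻ᵐ` times the gap
`y_{m+1} - y_m` times the influence received by the `m + 1` lowest agents (`sorted_growth`). This weighted sum
is the minimum, over all permutations, of linear functions of the positions (`lowSum`), so it is
absolutely continuous and the pointwise rate can be integrated (`min_growth`), although the sorting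
permutation varies with time.

Each interval `[t_p^q, t_p^{q+1}]` gives influence at least `1` to every group. If a group of
`m + 1` agents is separated by `δ` from the others above it, then over such an interval the weighted
sum exceeds its trivial lower bound by `K⁻⁽ᵐ⁺¹⁾ δ / 8` (`one_step`); hence for some `r ≤ m` all but
`r` agents have risen by `K⁻⁽ᵐ⁺¹⁻ʳ⁾ δ / (8n)` (`group_of_lowSum`). By induction, a low group of at most `k`
agents dissolves within `k` intervals, and the minimum rises by a multiple of `K⁻ᵏ δ`
(`block_lower`). At time `t_p` at most `⌊n/2⌋` agents are strictly below the middle of the range, or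
at most `⌊n/2⌋` are strictly above it; applying this to `x` or to `-x` with `k = ⌊n/2⌋` gives the
contraction (`diam_contract`).
-/

open MeasureTheory Filter Finset
open scoped ENNReal

/-- Interaction weights: non-negative, measurable, integrable on bounded intervals. -/
def IsWeight (n : ℕ) (a : Fin n → Fin n → ℝ → ℝ) : Prop :=
  ∀ i j : Fin n, (∀ t, 0 ≤ a i j t) ∧ Measurable (a i j) ∧
    ∀ T : ℝ, IntervalIntegrable (a i j) MeasureTheory.volume 0 T

/-- A trajectory of the continuous-time consensus system: a (locally absolutely) continuous
function satisfying the Carathéodory integral equation. -/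
def IsTrajectory (n : ℕ) (a : Fin n → Fin n → ℝ → ℝ) (x : ℝ → Fin n → ℝ) : Prop :=
  (∀ i : Fin n, ContinuousOn (fun t => x t i) (Set.Ici (0:ℝ))) ∧
  (∀ i : Fin n, ∀ t : ℝ, 0 ≤ t →
    IntervalIntegrable (fun s => ∑ j : Fin n, a i j s * (x s j - x s i))
      MeasureTheory.volume 0 t ∧
    x t i = x 0 i + ∫ s in (0:ℝ)..t, ∑ j : Fin n, a i j s * (x s j - x s i))

/-- Group diameter Δ_N(t). -/
noncomputable def diam (n : ℕ) (x : ℝ → Fin n → ℝ) (t : ℝ) : ℝ :=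
  (⨆ i, x t i) - (⨅ i, x t i)

/-- Persistent connectivity: the graph with edge (j,i) whenever ∫_0^∞ a_{ij} = ∞
is strongly connected. -/
def PersistentConn (n : ℕ) (a : Fin n → Fin n → ℝ → ℝ) : Prop :=
  ∀ u v : Fin n, Relation.ReflTransGen
    (fun j i => ∫⁻ s in Set.Ioi (0:ℝ), ENNReal.ofReal (a i j s) = ⊤) u v

noncomputable def cutSum (n : ℕ) (a : Fin n → Fin n → ℝ → ℝ)
    (S : Finset (Fin n)) (t0 t : ℝ) : ℝ :=
  ∑ i ∈ S, ∑ j ∈ Sᶜ, ∫ s in t0..t, a i j s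

noncomputable def minCut (n : ℕ) (a : Fin n → Fin n → ℝ → ℝ) (t0 t : ℝ) : ℝ :=
  sInf ((fun S => cutSum n a S t0 t) '' {S : Finset (Fin n) | S.Nonempty ∧ S ≠ Finset.univ})

/-- The smallest `t ≥ t0` with `minCut n a t0 t = 1`. -/
noncomputable def nextTime (n : ℕ) (a : Fin n → Fin n → ℝ → ℝ) (t0 : ℝ) : ℝ :=
  sInf {t : ℝ | t0 ≤ t ∧ minCut n a t0 t = 1}

/-- The rescaling sequence (t_p): t_0 = 0 and t_{p+1} is obtained from t_p by ⌊n/2⌋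
steps of `nextTime`. -/
noncomputable def tpSeq (n : ℕ) (a : Fin n → Fin n → ℝ → ℝ) : ℕ → ℝ :=
  fun p => ((nextTime n a)^[n/2])^[p] 0

/-- Intermediate times t_p^q. -/
noncomputable def tpq (n : ℕ) (a : Fin n → Fin n → ℝ → ℝ) (p q : ℕ) : ℝ :=
  (nextTime n a)^[q] (tpSeq n a p)

open Classical in
/-- The ratio r_S(t) of reciprocal interaction weights across the cut (S, N∖S). -/
noncomputable def rS (n : ℕ) (a : Fin n → Fin n → ℝ → ℝ) (S : Finset (Fin n)) (t : ℝ) : ℝ≥0∞ :=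
  if 0 < ∑ i ∈ S, ∑ j ∈ Sᶜ, a j i t then
    ENNReal.ofReal ((∑ i ∈ S, ∑ j ∈ Sᶜ, a i j t) / (∑ i ∈ S, ∑ j ∈ Sᶜ, a j i t))
  else if (∑ i ∈ S, ∑ j ∈ Sᶜ, a i j t) = 0 then 1 else ⊤

/-- r(t): maximal ratio over nonempty proper subsets. -/
noncomputable def rmax (n : ℕ) (a : Fin n → Fin n → ℝ → ℝ) (t : ℝ) : ℝ≥0∞ :=
  ⨆ S ∈ {S : Finset (Fin n) | S.Nonempty ∧ S ≠ Finset.univ}, rS n a S t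

/-- 𝐫(t) = sup_{s ∈ [0,t]} r(s). -/
noncomputable def rbold (n : ℕ) (a : Fin n → Fin n → ℝ → ℝ) (t : ℝ) : ℝ≥0∞ :=
  ⨆ s ∈ Set.Icc (0:ℝ) t, rmax n a s

/-- σ_t sorts the pairs (x_i(t), i) lexicographically. -/
def IsSortingPerm (n : ℕ) (x : ℝ → Fin n → ℝ) (σ : ℝ → Equiv.Perm (Fin n)) : Prop :=
  ∀ t : ℝ, ∀ i j : Fin n, i < j →
    x t (σ t i) < x t (σ t j) ∨ (x t (σ t i) = x t (σ t j) ∧ σ t i < σ t j)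

/-! ### Growth of a minimum of absolutely continuous functions -/

/-- A function whose increments are dominated by the sum of the increments of finitely many
absolutely continuous functions is absolutely continuous. -/
lemma absCont_of_dist_le_sum {ι : Type*} [Fintype ι] {f : ι → ℝ → ℝ} {F : ℝ → ℝ} {s T : ℝ}
    (hf : ∀ i, AbsolutelyContinuousOnInterval (f i) s T)
    (hF : ∀ t ∈ Set.uIcc s T, ∀ u ∈ Set.uIcc s T,
      dist (F t) (F u) ≤ ∑ i, dist (f i t) (f i u)) :
    AbsolutelyContinuousOnInterval F s T := by
  have h := tendsto_finsetSum (Finset.univ : Finset ι) (fun i _ => hf i)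
  simp only [Finset.sum_const_zero] at h
  refine squeeze_zero' (Eventually.of_forall fun E => Finset.sum_nonneg fun _ _ => dist_nonneg)
    ?_ h
  have hm : AbsolutelyContinuousOnInterval.disjWithin s T ∈
      AbsolutelyContinuousOnInterval.totalLengthFilter ⊓
        𝓟 (AbsolutelyContinuousOnInterval.disjWithin s T) :=
    mem_inf_of_right (mem_principal_self _)
  filter_upwards [hm] with E hE
  rw [Finset.sum_comm]
  exact Finset.sum_le_sum fun k hk => hF _ (hE.1 k hk).1 _ (hE.1 k hk).2

/-- Let `F` be the pointwise minimum of finitely many primitives `f i` of integrable functions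
`φ i`. If at each time some minimiser `i` has `h t ≤ φ i t`, then `F` grows at least by `∫ h`. Indeed
`F` is absolutely continuous, and wherever `F` and `f i` are both differentiable and `f i ≥ F`
touches `F`, their derivatives agree; so the choice of minimiser is immaterial for almost every `t`. -/
lemma min_growth {ι : Type*} [Fintype ι] {f φ : ι → ℝ → ℝ} {F h : ℝ → ℝ} {s T : ℝ}
    (hsT : s ≤ T) (hφ : ∀ i, IntervalIntegrable (φ i) volume s T)
    (hf : ∀ i, ∀ t ∈ Set.Icc s T, f i t = f i s + ∫ u in s..t, φ i u)
    (hF : ∀ t ∈ Set.Icc s T, ∀ i, F t ≤ f i t)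
    (hFex : ∀ t ∈ Set.Icc s T, ∃ i, F t = f i t)
    (hh : IntervalIntegrable h volume s T)
    (hle : ∀ t ∈ Set.Ioo s T, ∃ i, F t = f i t ∧ h t ≤ φ i t) :
    F s + ∫ u in s..T, h u ≤ F T := by
  have hfac : ∀ i, AbsolutelyContinuousOnInterval (f i) s T := by
    intro i
    have h1 := (hφ i).absolutelyContinuousOnInterval_intervalIntegral
      (c := s) Set.left_mem_uIcc
    refine absCont_of_dist_le_sum (ι := Unit) (fun _ => h1) ?_
    intro t ht u hu
    rw [Set.uIcc_of_le hsT] at ht hu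
    simp [hf i t ht, hf i u hu]
  have hFac : AbsolutelyContinuousOnInterval F s T := by
    refine absCont_of_dist_le_sum hfac ?_
    intro t ht u hu
    rw [Set.uIcc_of_le hsT] at ht hu
    obtain ⟨i, hi⟩ := hFex t ht
    obtain ⟨j, hj⟩ := hFex u hu
    have h1 := hF u hu i
    have h2 := hF t ht j
    have h3 : ∀ k, dist (f k t) (f k u) ≤ ∑ i, dist (f i t) (f i u) := fun k =>
      Finset.single_le_sum (f := fun i => dist (f i t) (f i u))
        (fun _ _ => dist_nonneg) (Finset.mem_univ k)
    have h4 := h3 i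
    have h5 := h3 j
    rw [Real.dist_eq] at h4 h5
    rw [Real.dist_eq, abs_le]
    have := abs_le.1 h4
    have := abs_le.1 h5
    constructor <;> linarith
  have hder : ∀ᵐ t, ∀ i, t ∈ Set.uIcc s T →
      HasDerivAt (fun x => ∫ u in s..x, φ i u) (φ i t) t := by
    rw [ae_all_iff]
    intro i
    filter_upwards [(hφ i).ae_hasDerivAt_integral] with t ht hts
    exact ht hts s Set.left_mem_uIcc
  have hne : ∀ᵐ t : ℝ, t ≠ s ∧ t ≠ T := by
    have h1 : ∀ᵐ t : ℝ, t ≠ s := by simp [ae_iff]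
    have h2 : ∀ᵐ t : ℝ, t ≠ T := by simp [ae_iff]
    filter_upwards [h1, h2] with t a b using ⟨a, b⟩
  have key : ∫ u in s..T, h u ≤ ∫ u in s..T, deriv F u := by
    refine intervalIntegral.integral_mono_ae_restrict hsT hh hFac.intervalIntegrable_deriv ?_
    rw [Filter.EventuallyLE, ae_restrict_iff' measurableSet_Icc]
    filter_upwards [hder, hne, hFac.ae_differentiableAt] with t h1 h2 h3 ht
    rw [Set.uIcc_of_le hsT] at h1 h3
    have hto : t ∈ Set.Ioo s T :=
      ⟨lt_of_le_of_ne ht.1 (Ne.symm h2.1), lt_of_le_of_ne ht.2 h2.2⟩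
    obtain ⟨i, hi, hhi⟩ := hle t hto
    have hnb : ∀ᶠ u in nhds t, u ∈ Set.Icc s T := Icc_mem_nhds hto.1 hto.2
    have hdf : HasDerivAt (f i) (φ i t) t := by
      refine ((h1 i ht).const_add (f i s)).congr_of_eventuallyEq ?_
      filter_upwards [hnb] with u hu using hf i u hu
    have hdF := (h3 ht).hasDerivAt
    have hmin : IsLocalMin (fun u => f i u - F u) t := by
      filter_upwards [hnb] with u hu
      have := hF u hu i
      simp only [hi]
      linarith
    have := hmin.hasDerivAt_eq_zero (hdf.sub hdF)
    linarith
  rw [hFac.integral_deriv_eq_sub] at key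
  linarith

/-! ### Weighted sums of sorted values under cut balance -/

/-- The weights `1, K⁻¹, …, K⁻ᵐ` on the positions `0, …, m`, and `0` on all later positions. -/
noncomputable def geomWt (K : ℝ) (m i : ℕ) : ℝ := if i ≤ m then K⁻¹ ^ i else 0

lemma geomWt_nonneg {K : ℝ} (hK : 1 ≤ K) (m i : ℕ) : 0 ≤ geomWt K m i := by
  unfold geomWt; split_ifs <;> positivity

lemma geomWt_anti {K : ℝ} (hK : 1 ≤ K) (m : ℕ) : Antitone (geomWt K m) := by
  intro i j hij
  unfold geomWt
  split_ifs with h1 h2 h2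
  · exact pow_le_pow_of_le_one (by positivity) (inv_le_one_of_one_le₀ hK) hij
  · omega
  · positivity
  · exact le_rfl

lemma geomWt_succ_mul {K : ℝ} (hK : 1 ≤ K) (m i : ℕ) :
    geomWt K m (i + 1) * K ≤ geomWt K m i := by
  have h0 : 0 < K := by linarith
  unfold geomWt
  split_ifs with h1 h2 h2
  · rw [pow_succ, mul_assoc, inv_mul_cancel₀ h0.ne', mul_one]
  · omega
  · simp only [zero_mul]; positivity
  · simp

lemma telescope_step (g : ℕ → ℝ) (N q : ℕ) (hq : q ≤ N) :
    ∑ l ∈ range N, (if l < q then g (l + 1) - g l else 0) = g q - g 0 := by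
  rw [← Finset.sum_filter, ← Finset.sum_range_sub]
  congr 1
  ext l
  simp only [Finset.mem_filter, Finset.mem_range]
  omega

/-- Growth rate of the weighted sum of the `m + 1` lowest positions when the values `y` are sorted.
Writing each `y j - y i` as a sum of consecutive gaps `y (l+1) - y l`, the coefficient `B l` of the
`l`-th gap is the weighted inflow into `{0, …, l}` minus the weighted inflow into its complement. As
the weights are antitone and the second inflow is at most `K` times the first, that coefficient is at
least `(geomWt l - K * geomWt (l+1)) * In l`, which is nonnegative, and equals `K⁻ᵐ * In m` for
`l = m`. -/
lemma sorted_growth {n : ℕ} {K : ℝ} (hK : 1 ≤ K) {m : ℕ} (hm : m + 1 < n)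
    {c : Fin n → Fin n → ℝ} (hc : ∀ i j, 0 ≤ c i j) {y : Fin n → ℝ} (hy : Monotone y)
    (hbal : ∀ l : ℕ, l + 1 < n →
      ∑ i : Fin n, ∑ j : Fin n, (if (j : ℕ) ≤ l ∧ l < (i : ℕ) then c i j else 0) ≤
      K * ∑ i : Fin n, ∑ j : Fin n, (if (i : ℕ) ≤ l ∧ l < (j : ℕ) then c i j else 0)) :
    geomWt K m m * (∑ i : Fin n, ∑ j : Fin n,
        (if (i : ℕ) ≤ m ∧ m < (j : ℕ) then c i j else 0)) *
        (y ⟨m + 1, hm⟩ - y ⟨m, by omega⟩) ≤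
      ∑ i : Fin n, geomWt K m i * ∑ j : Fin n, c i j * (y j - y i) := by
  obtain ⟨N, rfl⟩ : ∃ N, n = N + 1 := ⟨n - 1, by omega⟩
  set Y : ℕ → ℝ := fun l => y ⟨min l N, by omega⟩ with hY
  have hYv : ∀ i : Fin (N + 1), y i = Y i := by
    intro i
    simp only [hY]
    congr 1
    ext
    simp only
    omega
  set g : ℕ → ℝ := fun l => Y (l + 1) - Y l with hg
  have hg0 : ∀ l, 0 ≤ g l := by
    intro l
    simp only [hg, hY, sub_nonneg]
    apply hy
    simp only [Fin.mk_le_mk]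
    omega
  set In : ℕ → ℝ := fun l => ∑ i : Fin (N + 1), ∑ j : Fin (N + 1),
    (if (i : ℕ) ≤ l ∧ l < (j : ℕ) then c i j else 0) with hIn
  have hIn0 : ∀ l, 0 ≤ In l := fun l => Finset.sum_nonneg fun i _ =>
    Finset.sum_nonneg fun j _ => by split_ifs <;> simp [hc]
  set B : ℕ → ℝ := fun l => ∑ i : Fin (N + 1), ∑ j : Fin (N + 1),
    geomWt K m i * c i j * ((if l < (j : ℕ) then 1 else 0) - (if l < (i : ℕ) then 1 else 0))
    with hB
  have hsum : ∑ i : Fin (N + 1), geomWt K m i * ∑ j, c i j * (y j - y i) =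
      ∑ l ∈ range N, g l * B l := by
    have h1 : ∀ i j : Fin (N + 1), y j - y i = ∑ l ∈ range N,
        g l * ((if l < (j : ℕ) then 1 else 0) - (if l < (i : ℕ) then 1 else 0)) := by
      intro i j
      have hj := telescope_step Y N j (by omega)
      have hi := telescope_step Y N i (by omega)
      simp only [mul_sub, mul_ite, mul_one, mul_zero, Finset.sum_sub_distrib, hg]
      rw [hj, hi, hYv i, hYv j]
      ring
    simp only [h1, hB, Finset.mul_sum]
    rw [Finset.sum_comm (s := range N)]
    refine Finset.sum_congr rfl fun i _ => ?_
    rw [Finset.sum_comm (s := range N)]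
    refine Finset.sum_congr rfl fun j _ => Finset.sum_congr rfl fun l _ => ?_
    ring
  have hBl : ∀ l, l < N → geomWt K m l * In l - geomWt K m (l + 1) * (K * In l) ≤ B l := by
    intro l hl
    have h2 := mul_le_mul_of_nonneg_left (hbal l (by omega)) (geomWt_nonneg hK m (l + 1))
    refine le_trans (sub_le_sub_left h2 _) ?_
    simp only [hIn, hB, Finset.mul_sum, ← Finset.sum_sub_distrib]
    refine Finset.sum_le_sum fun i _ => Finset.sum_le_sum fun j _ => ?_
    by_cases hi : l < (i : ℕ) <;> by_cases hj : l < (j : ℕ)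
    · simp [hi, hj, not_le.2 hi, not_le.2 hj]
    · have := mul_le_mul_of_nonneg_right
        (geomWt_anti hK m (show l + 1 ≤ (i : ℕ) by omega)) (hc i j)
      simp only [hi, hj, not_lt.1 hj, not_le.2 hi, and_true, and_false, if_true, if_false]
      linarith
    · have := mul_le_mul_of_nonneg_right
        (geomWt_anti hK m (show (i : ℕ) ≤ l by omega)) (hc i j)
      simp only [hi, hj, not_lt.1 hi, not_le.2 hj, and_true, and_false, if_true, if_false]
      linarith
    · simp [hi, hj]
  have hBnn : ∀ l, l < N → 0 ≤ B l := by
    intro l hl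
    refine le_trans ?_ (hBl l hl)
    have := mul_le_mul_of_nonneg_right (geomWt_succ_mul hK m l) (hIn0 l)
    linarith
  have hBm : geomWt K m m * In m ≤ B m := by
    refine le_trans ?_ (hBl m (by omega))
    simp [geomWt]
  rw [hsum]
  have hgm : y ⟨m + 1, hm⟩ - y ⟨m, by omega⟩ = g m := by
    rw [hYv, hYv]
  rw [hgm]
  calc geomWt K m m * In m * g m ≤ g m * B m := by
        rw [mul_comm]
        exact mul_le_mul_of_nonneg_left hBm (hg0 m)
    _ ≤ ∑ l ∈ range N, g l * B l :=
        Finset.single_le_sum (f := fun l => g l * B l)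
          (fun l hl => mul_nonneg (hg0 l) (hBnn l (Finset.mem_range.1 hl)))
          (Finset.mem_range.2 (by omega))

/-- Across every cut `(S, Sᶜ)`, the total influence of `S` on `Sᶜ` is at most `K` times the total
influence of `Sᶜ` on `S` (`b i j` being the influence of `j` on `i`). -/
def CutBalanced {n : ℕ} (K : ℝ) (b : Fin n → Fin n → ℝ) : Prop :=
  ∀ S : Finset (Fin n), ∑ i ∈ S, ∑ j ∈ Sᶜ, b j i ≤ K * ∑ i ∈ S, ∑ j ∈ Sᶜ, b i j

/-- The sum across the cut formed by the `l + 1` first agents of the ordering `π`, rewritten in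
terms of positions. -/
lemma cut_perm_sum {n : ℕ} (π : Equiv.Perm (Fin n)) (l : ℕ) (f : Fin n → Fin n → ℝ) :
    ∑ i ∈ univ.filter (fun v => ((π.symm v : Fin n) : ℕ) ≤ l),
      ∑ j ∈ (univ.filter (fun v => ((π.symm v : Fin n) : ℕ) ≤ l))ᶜ, f i j =
    ∑ i : Fin n, ∑ j : Fin n,
      if (i : ℕ) ≤ l ∧ l < (j : ℕ) then f (π i) (π j) else 0 := by
  rw [Finset.sum_filter, ← Equiv.sum_comp π]
  refine Finset.sum_congr rfl fun i _ => ?_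
  rw [Finset.compl_filter, Finset.sum_filter, ← Equiv.sum_comp π]
  simp only [Equiv.symm_apply_apply, not_le]
  by_cases hi : (i : ℕ) ≤ l <;> simp [hi]

/-- If every agent of `A` lies strictly below every agent outside `A`, then `A` consists of the
`A.card` first agents of any sorting permutation. -/
lemma lowest_eq {n m : ℕ} {x : Fin n → ℝ} {π : Equiv.Perm (Fin n)} (hπ : Monotone (x ∘ π))
    {A : Finset (Fin n)} (hA : A.card = m + 1) (hsep : ∀ i ∈ A, ∀ j ∉ A, x i < x j) :
    univ.filter (fun v => ((π.symm v : Fin n) : ℕ) ≤ m) = A := by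
  have hlow : ∀ i j : Fin n, i ≤ j → π j ∈ A → π i ∈ A := by
    intro i j hij hj
    by_contra hi
    exact absurd (hπ hij) (not_le.2 (hsep _ hj _ hi))
  have hcard : (univ.filter (fun v => π v ∈ A)).card = m + 1 := by
    rw [← hA]
    exact Finset.card_bij (fun v _ => π v) (by simp) (fun a _ b _ h => π.injective h)
      (fun b hb => ⟨π.symm b, by simpa using hb, by simp⟩)
  ext v
  obtain ⟨u, rfl⟩ := π.surjective v
  simp only [Finset.mem_filter, Finset.mem_univ, true_and, Equiv.symm_apply_apply]
  constructor
  · intro hu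
    by_contra hv
    have hsub : univ.filter (fun v => π v ∈ A) ⊆ Finset.Iio u := by
      intro w hw
      simp only [Finset.mem_filter, Finset.mem_univ, true_and] at hw
      rw [Finset.mem_Iio]
      by_contra hwu
      exact hv (hlow _ _ (not_lt.1 hwu) hw)
    have := Finset.card_le_card hsub
    rw [hcard, Fin.card_Iio] at this
    omega
  · intro hv
    have hsub : Finset.Iic u ⊆ univ.filter (fun v => π v ∈ A) := by
      intro w hw
      simp only [Finset.mem_filter, Finset.mem_univ, true_and]
      exact hlow _ _ (Finset.mem_Iic.1 hw) hv
    have := Finset.card_le_card hsub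
    rw [hcard, Fin.card_Iic] at this
    omega

/-- `sorted_growth` transported to the agents' own labels by a sorting permutation `π`. -/
lemma perm_growth {n : ℕ} {K : ℝ} (hK : 1 ≤ K) {m : ℕ} (hm : m + 1 < n)
    {b : Fin n → Fin n → ℝ} (hb : ∀ i j, 0 ≤ b i j) (hcut : CutBalanced K b)
    {x : Fin n → ℝ} {π : Equiv.Perm (Fin n)} (hπ : Monotone (x ∘ π)) :
    geomWt K m m * (∑ i : Fin n, ∑ j : Fin n,
        (if (i : ℕ) ≤ m ∧ m < (j : ℕ) then b (π i) (π j) else 0)) *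
        (x (π ⟨m + 1, hm⟩) - x (π ⟨m, by omega⟩)) ≤
      ∑ i : Fin n, geomWt K m i * ∑ j : Fin n, b (π i) j * (x j - x (π i)) := by
  have h := sorted_growth hK hm (c := fun i j => b (π i) (π j)) (fun i j => hb _ _) hπ ?_
  · refine h.trans (le_of_eq ?_)
    refine Finset.sum_congr rfl fun i _ => ?_
    rw [← Equiv.sum_comp π (fun j => b (π i) j * (x j - x (π i)))]
    rfl
  · intro l _
    have h1 := hcut (univ.filter (fun v => ((π.symm v : Fin n) : ℕ) ≤ l))
    rw [cut_perm_sum π l b, cut_perm_sum π l (fun i j => b j i)] at h1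
    rw [Finset.sum_comm]
    exact h1

lemma perm_growth_nonneg {n : ℕ} {K : ℝ} (hK : 1 ≤ K) {m : ℕ} (hm : m + 1 < n)
    {b : Fin n → Fin n → ℝ} (hb : ∀ i j, 0 ≤ b i j) (hcut : CutBalanced K b)
    {x : Fin n → ℝ} {π : Equiv.Perm (Fin n)} (hπ : Monotone (x ∘ π)) :
    0 ≤ ∑ i : Fin n, geomWt K m i * ∑ j : Fin n, b (π i) j * (x j - x (π i)) := by
  refine le_trans ?_ (perm_growth hK hm hb hcut hπ)
  refine mul_nonneg (mul_nonneg (geomWt_nonneg hK _ _) ?_) (sub_nonneg.2 (hπ ?_))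
  · exact Finset.sum_nonneg fun i _ => Finset.sum_nonneg fun j _ => by split_ifs <;> simp [hb]
  · simp

lemma perm_growth_cut {n : ℕ} {K : ℝ} (hK : 1 ≤ K) {m : ℕ} (hm : m + 1 < n)
    {b : Fin n → Fin n → ℝ} (hb : ∀ i j, 0 ≤ b i j) (hcut : CutBalanced K b)
    {x : Fin n → ℝ} {π : Equiv.Perm (Fin n)} (hπ : Monotone (x ∘ π))
    {A : Finset (Fin n)} (hA : A.card = m + 1) {G : ℝ} (hG : 0 < G)
    (hsep : ∀ i ∈ A, ∀ j ∉ A, x i + G ≤ x j) :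
    K⁻¹ ^ m * G * ∑ i ∈ A, ∑ j ∈ Aᶜ, b i j ≤
      ∑ i : Fin n, geomWt K m i * ∑ j : Fin n, b (π i) j * (x j - x (π i)) := by
  have hS := lowest_eq hπ hA (fun i hi j hj => by linarith [hsep i hi j hj])
  refine le_trans ?_ (perm_growth hK hm hb hcut hπ)
  rw [← cut_perm_sum, hS]
  have h1 : π ⟨m, Nat.lt_of_succ_lt hm⟩ ∈ A := hS ▸ (by simp)
  have h2 : π ⟨m + 1, hm⟩ ∉ A := hS ▸ (by simp)
  have h3 := hsep _ h1 _ h2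
  have h4 : geomWt K m m = K⁻¹ ^ m := by simp [geomWt]
  rw [h4, mul_right_comm]
  refine mul_le_mul_of_nonneg_left (by linarith) (mul_nonneg (by positivity) ?_)
  exact Finset.sum_nonneg fun i _ => Finset.sum_nonneg fun j _ => hb _ _

/-! ### Trajectories -/

lemma intervalIntegrable_sum {ι : Type*} (A : Finset ι) {f : ι → ℝ → ℝ} {s T : ℝ}
    (h : ∀ i ∈ A, IntervalIntegrable (f i) volume s T) :
    IntervalIntegrable (fun u => ∑ i ∈ A, f i u) volume s T := by
  simpa only [Finset.sum_fn] using IntervalIntegrable.sum A h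

/-- The velocity of agent `i` at time `s`, i.e. the integrand in the trajectory equation. -/
noncomputable def flow {n : ℕ} (a : Fin n → Fin n → ℝ → ℝ) (x : ℝ → Fin n → ℝ) (i : Fin n)
    (s : ℝ) : ℝ := ∑ j : Fin n, a i j s * (x s j - x s i)

lemma IsTrajectory.flow_integrable {n : ℕ} {a : Fin n → Fin n → ℝ → ℝ} {x : ℝ → Fin n → ℝ}
    (hx : IsTrajectory n a x) (i : Fin n) {s t : ℝ} (hs : 0 ≤ s) (ht : 0 ≤ t) :
    IntervalIntegrable (flow a x i) volume s t :=
  (hx.2 i s hs).1.symm.trans (hx.2 i t ht).1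

lemma IsTrajectory.eq_add {n : ℕ} {a : Fin n → Fin n → ℝ → ℝ} {x : ℝ → Fin n → ℝ}
    (hx : IsTrajectory n a x) (i : Fin n) {s t : ℝ} (hs : 0 ≤ s) (ht : 0 ≤ t) :
    x t i = x s i + ∫ u in s..t, flow a x i u := by
  have h1 := (hx.2 i s hs).2
  have h2 := (hx.2 i t ht).2
  have h3 := intervalIntegral.integral_add_adjacent_intervals
    (hx.flow_integrable i le_rfl hs) (hx.flow_integrable i hs ht)
  simp only [flow] at h3 ⊢
  linarith

lemma IsWeight.integrable {n : ℕ} {a : Fin n → Fin n → ℝ → ℝ} (ha : IsWeight n a)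
    (i j : Fin n) (s t : ℝ) : IntervalIntegrable (a i j) volume s t :=
  ((ha i j).2.2 s).symm.trans ((ha i j).2.2 t)

lemma IsTrajectory.neg {n : ℕ} {a : Fin n → Fin n → ℝ → ℝ} {x : ℝ → Fin n → ℝ}
    (hx : IsTrajectory n a x) : IsTrajectory n a (fun t i => - x t i) := by
  have h : ∀ i : Fin n, (fun s => ∑ j : Fin n, a i j s * (- x s j - - x s i)) =
      fun s => - ∑ j : Fin n, a i j s * (x s j - x s i) := by
    intro i
    ext s
    rw [← Finset.sum_neg_distrib]
    exact Finset.sum_congr rfl fun j _ => by ring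
  refine ⟨fun i => (hx.1 i).neg, fun i t ht => ?_⟩
  obtain ⟨h1, h2⟩ := hx.2 i t ht
  rw [h i]
  refine ⟨h1.neg, ?_⟩
  rw [intervalIntegral.integral_neg]
  linarith

/-- The minimum of the agents' positions never decreases. -/
lemma lower_bound_mono {n : ℕ} {a : Fin n → Fin n → ℝ → ℝ} {x : ℝ → Fin n → ℝ}
    (ha : IsWeight n a) (hx : IsTrajectory n a x) {s T β : ℝ} (hs : 0 ≤ s) (hsT : s ≤ T)
    (hβ : ∀ i, β ≤ x s i) (i : Fin n) : β ≤ x T i := by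
  have : Nonempty (Fin n) := ⟨i⟩
  have hle : ∀ t i, (⨅ k, x t k) ≤ x t i := fun t i => ciInf_le (Set.finite_range _).bddBelow i
  have hex : ∀ t, ∃ i, x t i = ⨅ k, x t k := fun t => exists_eq_ciInf_of_finite
  have h := min_growth (f := fun i t => x t i) (φ := fun i => flow a x i)
    (F := fun t => ⨅ k, x t k) (h := fun _ => 0) hsT
    (fun i => hx.flow_integrable i hs (hs.trans hsT))
    (fun i t ht => hx.eq_add i hs (hs.trans ht.1)) (fun t _ i => hle t i)
    (fun t _ => (hex t).imp fun _ h => h.symm) (by simp) ?_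
  · simp only [intervalIntegral.integral_zero, add_zero] at h
    exact (le_ciInf hβ).trans (h.trans (hle T i))
  · intro t _
    obtain ⟨k, hk⟩ := hex t
    refine ⟨k, hk.symm, Finset.sum_nonneg fun j _ => mul_nonneg ((ha k j).1 t) ?_⟩
    rw [hk]
    linarith [hle t j]

/-- If the agents outside `A` start above `β + δ` and nobody starts below `β`, then the downward
pull that `A` exerts on an outside agent is at most `δ` times the influence of `A` on `Aᶜ`. The
minimum considered in the proof runs over the agents outside `A` together with the constant `β + δ`,
which caps the distance of the minimiser to `β` by `δ`. -/
lemma upper_group_drop {n : ℕ} {a : Fin n → Fin n → ℝ → ℝ} {x : ℝ → Fin n → ℝ}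
    (ha : IsWeight n a) (hx : IsTrajectory n a x) {s T β δ : ℝ} (hs : 0 ≤ s) (hsT : s ≤ T)
    (hδ : 0 ≤ δ) (hβ : ∀ i, β ≤ x s i) {A : Finset (Fin n)}
    (hA : ∀ j ∉ A, β + δ ≤ x s j) {j : Fin n} (hj : j ∉ A) :
    β + δ - δ * (∫ u in s..T, ∑ i ∈ A, ∑ j ∈ Aᶜ, a j i u) ≤ x T j := by
  set f : Option {j : Fin n // j ∉ A} → ℝ → ℝ :=
    fun o t => o.elim (β + δ) (fun j => x t j) with hf
  set φ : Option {j : Fin n // j ∉ A} → ℝ → ℝ :=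
    fun o t => o.elim 0 (fun j => flow a x j t) with hφ
  have hle : ∀ t o, (⨅ k, f k t) ≤ f o t :=
    fun t o => ciInf_le (f := fun k => f k t) (Set.finite_range _).bddBelow o
  have hex : ∀ t, ∃ o, f o t = ⨅ k, f k t := fun t => exists_eq_ciInf_of_finite
  have hout : IntervalIntegrable (fun u => ∑ i ∈ A, ∑ j ∈ Aᶜ, a j i u) volume s T := by
    exact intervalIntegrable_sum A fun i _ => intervalIntegrable_sum Aᶜ
      fun j _ => ha.integrable j i s T
  have h := min_growth (f := f) (φ := φ) (F := fun t => ⨅ k, f k t)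
    (h := fun u => -(δ * ∑ i ∈ A, ∑ j ∈ Aᶜ, a j i u)) hsT ?_ ?_ (fun t _ o => hle t o)
    (fun t _ => (hex t).imp fun _ h => h.symm) ((hout.const_mul δ).neg) ?_
  · rw [intervalIntegral.integral_neg, intervalIntegral.integral_const_mul] at h
    have h1 : β + δ ≤ ⨅ k, f k s := by
      refine le_ciInf fun o => ?_
      cases o with
      | none => exact le_rfl
      | some k => exact hA k k.2
    have h2 : (⨅ k, f k T) ≤ x T j := hle T (some ⟨j, hj⟩)
    linarith
  · intro o
    cases o with
    | none => simp [hφ]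
    | some k => exact hx.flow_integrable k hs (hs.trans hsT)
  · intro o t ht
    cases o with
    | none => simp [hφ, hf]
    | some k => exact hx.eq_add k hs (hs.trans ht.1)
  · intro t ht
    have hβt := lower_bound_mono ha hx hs ht.1.le hβ
    have hnn : ∀ i ∈ A, 0 ≤ ∑ j ∈ Aᶜ, a j i t :=
      fun i _ => Finset.sum_nonneg fun j _ => (ha j i).1 t
    obtain ⟨o, ho⟩ := hex t
    refine ⟨o, ho.symm, ?_⟩
    cases o with
    | none =>
      simp only [hφ, Option.elim_none, neg_nonpos]
      exact mul_nonneg hδ (Finset.sum_nonneg hnn)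
    | some k =>
      have hmin : ∀ l ∉ A, x t k ≤ x t l := fun l hl => by
        have := hle t (some ⟨l, hl⟩)
        rw [← ho] at this
        exact this
      have hcap : x t k ≤ β + δ := by
        have := hle t none
        rw [← ho] at this
        exact this
      have hk : (k : Fin n) ∈ Aᶜ := Finset.mem_compl.2 k.2
      simp only [hφ, Option.elim_some, flow]
      rw [← Finset.sum_add_sum_compl A]
      have h1 : 0 ≤ ∑ l ∈ Aᶜ, a k l t * (x t l - x t k) :=
        Finset.sum_nonneg fun l hl => mul_nonneg ((ha k l).1 t)
          (by linarith [hmin l (Finset.mem_compl.1 hl)])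
      have h2 : -(δ * ∑ i ∈ A, ∑ j ∈ Aᶜ, a j i t) ≤ ∑ l ∈ A, a k l t * (x t l - x t k) := by
        rw [Finset.mul_sum, ← Finset.sum_neg_distrib]
        refine Finset.sum_le_sum fun l hl => ?_
        have h3 : a k l t ≤ ∑ j ∈ Aᶜ, a j l t :=
          Finset.single_le_sum (f := fun j => a j l t) (fun j _ => (ha j l).1 t) hk
        have h4 := mul_le_mul_of_nonneg_left h3 hδ
        have h5 := (ha k l).1 t
        have h6 := mul_le_mul_of_nonneg_left
          (show -δ ≤ x t l - x t k by linarith [hβt l]) h5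
        linarith
      linarith

/-! ### The weighted sum of the lowest positions -/

/-- The least value over all orderings `π` of the sum of the entries of `v` along `π`, weighted by
`geomWt K m`. For `K ≥ 1` the weights are antitone, so the sorting permutations are minimisers and
this is `∑_{i ≤ m} K⁻ⁱ v₍ᵢ₎` over the sorted entries `v₍ᵢ₎`. As a minimum of finitely many linear functions it
is amenable to `min_growth`. -/
noncomputable def lowSum {n : ℕ} (K : ℝ) (m : ℕ) (v : Fin n → ℝ) : ℝ :=
  ⨅ π : Equiv.Perm (Fin n), ∑ i : Fin n, geomWt K m i * v (π i)

lemma lowSum_le {n : ℕ} (K : ℝ) (m : ℕ) (v : Fin n → ℝ) (π : Equiv.Perm (Fin n)) :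
    lowSum K m v ≤ ∑ i : Fin n, geomWt K m i * v (π i) :=
  ciInf_le (f := fun π : Equiv.Perm (Fin n) => ∑ i : Fin n, geomWt K m i * v (π i))
    (Set.finite_range _).bddBelow π

lemma lowSum_exists {n : ℕ} (K : ℝ) (m : ℕ) (v : Fin n → ℝ) :
    ∃ π : Equiv.Perm (Fin n), lowSum K m v = ∑ i : Fin n, geomWt K m i * v (π i) := by
  obtain ⟨π, h⟩ := exists_eq_ciInf_of_finite
    (f := fun π : Equiv.Perm (Fin n) => ∑ i : Fin n, geomWt K m i * v (π i))
  exact ⟨π, h.symm⟩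

lemma lowSum_eq_of_sorted {n : ℕ} {K : ℝ} (hK : 1 ≤ K) (m : ℕ) {v : Fin n → ℝ}
    {π : Equiv.Perm (Fin n)} (hπ : Monotone (v ∘ π)) :
    lowSum K m v = ∑ i : Fin n, geomWt K m i * v (π i) := by
  refine le_antisymm (lowSum_le K m v π) (le_ciInf fun ρ => ?_)
  have hw : Antitone (fun i : Fin n => geomWt K m i) := fun i j hij => geomWt_anti hK m hij
  have h := (hw.antivary hπ).sum_smul_le_sum_smul_comp_perm (σ := ρ.trans π.symm)
  simpa using h

lemma lowSum_growth {n : ℕ} {a : Fin n → Fin n → ℝ → ℝ} {x : ℝ → Fin n → ℝ}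
    (hx : IsTrajectory n a x) {K : ℝ} (hK : 1 ≤ K) (m : ℕ) {s T : ℝ} (hs : 0 ≤ s)
    (hsT : s ≤ T) {h : ℝ → ℝ} (hh : IntervalIntegrable h volume s T)
    (hle : ∀ t ∈ Set.Ioo s T, ∀ π : Equiv.Perm (Fin n), Monotone (x t ∘ π) →
      h t ≤ ∑ i : Fin n, geomWt K m i * ∑ j : Fin n, a (π i) j t * (x t j - x t (π i))) :
    lowSum K m (x s) + ∫ u in s..T, h u ≤ lowSum K m (x T) := by
  have hint : ∀ π : Equiv.Perm (Fin n), ∀ t, s ≤ t → ∀ i ∈ (univ : Finset (Fin n)),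
      IntervalIntegrable (fun t => geomWt K m i * flow a x (π i) t) volume s t :=
    fun π t ht i _ => (hx.flow_integrable (π i) hs (hs.trans ht)).const_mul _
  refine min_growth (ι := Equiv.Perm (Fin n)) (F := fun t => lowSum K m (x t))
    (f := fun π t => ∑ i : Fin n, geomWt K m i * x t (π i))
    (φ := fun π t => ∑ i : Fin n, geomWt K m i * flow a x (π i) t) hsT ?_ ?_
    (fun t _ π => lowSum_le K m _ π) (fun t _ => lowSum_exists K m _) hh ?_
  · intro π
    exact intervalIntegrable_sum univ (hint π T hsT)
  · intro π t ht
    rw [intervalIntegral.integral_finsetSum (hint π t ht.1), ← Finset.sum_add_distrib]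
    refine Finset.sum_congr rfl fun i _ => ?_
    rw [intervalIntegral.integral_const_mul, hx.eq_add (π i) hs (hs.trans ht.1)]
    ring
  · intro t ht
    have hsort := Tuple.monotone_sort (x t)
    exact ⟨_, lowSum_eq_of_sorted hK m hsort, hle t ht _ hsort⟩

lemma lowSum_lower {n : ℕ} {K : ℝ} (hK : 1 ≤ K) (m : ℕ) {v : Fin n → ℝ} {β : ℝ}
    (hβ : ∀ i, β ≤ v i) : ∑ i : Fin n, geomWt K m i * β ≤ lowSum K m v := by
  obtain ⟨π, h⟩ := lowSum_exists K m v
  rw [h]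
  exact Finset.sum_le_sum fun i _ => mul_le_mul_of_nonneg_left (hβ _) (geomWt_nonneg hK m i)

/-- If at most `m` agents of a group `A` of size `m + 1` are below `β + γ`, and none outside it, then
one of the first `m + 1` positions of any ordering is at least `β + γ` and adds at least `K⁻ᵐ γ` to `lowSum`. -/
lemma lowSum_lower_of_group {n : ℕ} {K : ℝ} (hK : 1 ≤ K) {m : ℕ} (hm : m + 1 < n)
    {v : Fin n → ℝ} {β γ : ℝ} (hβ : ∀ i, β ≤ v i) (hγ : 0 ≤ γ) {A : Finset (Fin n)}
    (hA : A.card = m + 1) {i₀ : Fin n} (hi₀ : i₀ ∈ A) (hv₀ : β + γ ≤ v i₀)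
    (hout : ∀ j ∉ A, β + γ ≤ v j) :
    ∑ i : Fin n, geomWt K m i * β + K⁻¹ ^ m * γ ≤ lowSum K m v := by
  obtain ⟨π, h⟩ := lowSum_exists K m v
  obtain ⟨p, hpm, hp⟩ : ∃ p : Fin n, (p : ℕ) ≤ m ∧ β + γ ≤ v (π p) := by
    by_contra hcon
    push Not at hcon
    -- otherwise the first `m + 1` positions are mapped injectively into `A \ {i₀}`
    have hmaps : ∀ p ∈ Finset.Iic (⟨m, by omega⟩ : Fin n), π p ∈ A.erase i₀ := by
      intro p hp
      have hp' := hcon p (by simpa [Fin.le_def] using hp)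
      rw [Finset.mem_erase]
      refine ⟨fun h => ?_, ?_⟩
      · rw [h] at hp'
        linarith
      · by_contra hpA
        linarith [hout _ hpA]
    have := Finset.card_le_card_of_injOn π hmaps π.injective.injOn
    rw [Finset.card_erase_of_mem hi₀, hA, Fin.card_Iic] at this
    simp at this
  have hwp : K⁻¹ ^ m ≤ geomWt K m p := by
    have := geomWt_anti hK m hpm
    simpa [geomWt] using this
  have h1 : geomWt K m p * (v (π p) - β) ≤ ∑ i : Fin n, geomWt K m i * (v (π i) - β) :=
    Finset.single_le_sum (f := fun i : Fin n => geomWt K m i * (v (π i) - β))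
      (fun i _ => mul_nonneg (geomWt_nonneg hK m i) (by linarith [hβ (π i)]))
      (Finset.mem_univ p)
  have h2 : K⁻¹ ^ m * γ ≤ geomWt K m p * (v (π p) - β) :=
    mul_le_mul hwp (by linarith) hγ (geomWt_nonneg hK m p)
  simp only [mul_sub, Finset.sum_sub_distrib] at h1
  linarith

/-- A surplus of `lowSum` over its value at the constant vector `β` must come from some sorted
position `r ≤ m`, so all but the `r` lowest agents are above `β` by a definite amount. The exponent
`m + 1 - r` is what makes the powers of `K` add up to `m + 1` in `block_lower`. -/
lemma group_of_lowSum {n : ℕ} {K : ℝ} (hK : 1 ≤ K) {m : ℕ} (hm : m + 1 < n)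
    {v : Fin n → ℝ} {β X : ℝ} (hX : 0 < X)
    (h : ∑ i : Fin n, geomWt K m i * β + K⁻¹ ^ (m + 1) * X ≤ lowSum K m v) :
    ∃ r : ℕ, r ≤ m ∧ ∃ B : Finset (Fin n), B.card ≤ r ∧
      ∀ i ∉ B, β + K⁻¹ ^ (m + 1 - r) * (X / n) ≤ v i := by
  have hK0 : 0 < K := by linarith
  have hn : (0 : ℝ) < n := by exact_mod_cast (show 0 < n by omega)
  set π := Tuple.sort v with hπdef
  have hπ : Monotone (v ∘ π) := Tuple.monotone_sort v
  rw [lowSum_eq_of_sorted hK m hπ] at h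
  have h1 : ∑ _i : Fin n, K⁻¹ ^ (m + 1) * (X / n) ≤
      ∑ i : Fin n, geomWt K m i * (v (π i) - β) := by
    simp only [mul_sub, Finset.sum_sub_distrib, Finset.sum_const, Finset.card_univ,
      Fintype.card_fin, nsmul_eq_mul]
    have : (n : ℝ) * (K⁻¹ ^ (m + 1) * (X / n)) = K⁻¹ ^ (m + 1) * X := by
      field_simp
    rw [this]
    linarith
  obtain ⟨r, -, hr⟩ := Finset.exists_le_of_sum_le
    (⟨⟨0, by omega⟩, Finset.mem_univ _⟩ : (univ : Finset (Fin n)).Nonempty) h1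
  have hpos : 0 < K⁻¹ ^ (m + 1) * (X / n) := by positivity
  have hrm : (r : ℕ) ≤ m := by
    by_contra hcon
    simp only [geomWt, hcon, if_false, zero_mul] at hr
    linarith
  have hvr : β + K⁻¹ ^ (m + 1 - (r : ℕ)) * (X / n) ≤ v (π r) := by
    simp only [geomWt, hrm, if_true] at hr
    have hsplit : K⁻¹ ^ (m + 1) = K⁻¹ ^ (r : ℕ) * K⁻¹ ^ (m + 1 - (r : ℕ)) := by
      rw [← pow_add]
      congr 1
      omega
    rw [hsplit, mul_assoc] at hr
    have := le_of_mul_le_mul_left hr (by positivity)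
    linarith
  refine ⟨r, hrm, (Finset.Iio r).map π.toEmbedding, by simp, fun i hi => ?_⟩
  obtain ⟨p, rfl⟩ := π.surjective i
  have hp : r ≤ p := by
    by_contra hcon
    exact hi (by simpa using not_le.1 hcon)
  exact hvr.trans (hπ hp)

/-! ### Rise of the minimum and contraction of the diameter -/

/-- If all agents outside a group `A` of size `m + 1` are at least `β + δ`, and `A` receives a total
influence of at least `1` on `[s, T]`, then `lowSum` is at the end above its floor by at least `K⁻⁽ᵐ⁺¹⁾ δ / 8`.

If the gap between `A` and its complement stays at least `δ / 2`, the influence on `A` feeds `lowSum`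
directly. Otherwise let `τ` be the first time at which this gap is at most `δ / 2`. Either some outside agent has
dropped to `β + 3δ/4` by then, which forces an outflow from `A`, hence by cut balance an inflow
at least `1 / (4K)`, during a period when the gap was at least `δ / 2`; or some agent of `A` has
risen to `β + δ / 4`. -/
lemma one_step {n : ℕ} {a : Fin n → Fin n → ℝ → ℝ} {x : ℝ → Fin n → ℝ}
    (ha : IsWeight n a) (hx : IsTrajectory n a x) {K : ℝ} (hK : 1 ≤ K) {m : ℕ}
    (hm : m + 1 < n) {s T β δ : ℝ} (hs : 0 ≤ s) (hsT : s ≤ T)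
    (hbal : ∀ t ∈ Set.Icc s T, CutBalanced K (fun i j => a i j t)) (hδ : 0 < δ)
    (hβ : ∀ i, β ≤ x s i) {A : Finset (Fin n)} (hA : A.card = m + 1)
    (hcut : 1 ≤ cutSum n a A s T)
    (hhigh : ∀ j ∉ A, β + δ ≤ x s j) :
    ∑ i : Fin n, geomWt K m i * β + K⁻¹ ^ (m + 1) * (δ / 8) ≤ lowSum K m (x T) := by
  have hK0 : 0 < K := by linarith
  have hKm : 0 < K⁻¹ ^ m := by positivity
  have hKm1 : K⁻¹ ^ (m + 1) ≤ K⁻¹ ^ m :=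
    pow_le_pow_of_le_one (by positivity) (inv_le_one_of_one_le₀ hK) (by omega)
  set In : ℝ → ℝ := fun u => ∑ i ∈ A, ∑ j ∈ Aᶜ, a i j u with hIn
  have hInI : ∀ p q, IntervalIntegrable In volume p q := fun p q =>
    intervalIntegrable_sum A fun i _ => intervalIntegrable_sum Aᶜ
      fun j _ => ha.integrable i j p q
  have hOutI : ∀ p q, IntervalIntegrable (fun u => ∑ i ∈ A, ∑ j ∈ Aᶜ, a j i u) volume p q :=
    fun p q => intervalIntegrable_sum A fun i _ => intervalIntegrable_sum Aᶜ
      fun j _ => ha.integrable j i p q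
  have hmono : ∀ p q, s ≤ p → p ≤ q → q ≤ T → lowSum K m (x p) ≤ lowSum K m (x q) := by
    intro p q hp hpq hq
    have := lowSum_growth hx hK m (hs.trans hp) hpq (h := fun _ => 0) (by simp)
      (fun t ht π hπ => perm_growth_nonneg hK hm (fun i j => (ha i j).1 t)
        (hbal t ⟨hp.trans ht.1.le, ht.2.le.trans hq⟩) hπ)
    simpa using this
  have hgrow : ∀ q, s ≤ q → q ≤ T →
      (∀ t ∈ Set.Ioo s q, ∀ i ∈ A, ∀ j ∉ A, x t i + δ / 2 ≤ x t j) →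
      lowSum K m (x s) + K⁻¹ ^ m * (δ / 2) * (∫ u in s..q, In u) ≤ lowSum K m (x q) := by
    intro q hsq hqT hsep
    have := lowSum_growth hx hK m hs hsq (h := fun u => K⁻¹ ^ m * (δ / 2) * In u)
      ((hInI s q).const_mul _)
      (fun t ht π hπ => perm_growth_cut hK hm (fun i j => (ha i j).1 t)
        (hbal t ⟨ht.1.le, ht.2.le.trans hqT⟩) hπ hA (by positivity) (hsep t ht))
    rwa [intervalIntegral.integral_const_mul] at this
  have hstart := lowSum_lower hK m hβ
  -- times at which the gap between the two groups has shrunk to `δ / 2`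
  set Z : Set ℝ := ⋃ i ∈ A, ⋃ j ∈ Aᶜ, {t ∈ Set.Icc s T | x t j ≤ x t i + δ / 2} with hZ
  have hZc : IsClosed Z := by
    refine isClosed_biUnion_finset fun i _ => isClosed_biUnion_finset fun j _ => ?_
    have hsub : Set.Icc s T ⊆ Set.Ici 0 := fun t ht => hs.trans ht.1
    exact isClosed_Icc.isClosed_le ((hx.1 j).mono hsub)
      (((hx.1 i).mono hsub).add continuousOn_const)
  have hZmem : ∀ t, t ∈ Z ↔ ∃ i ∈ A, ∃ j ∉ A, t ∈ Set.Icc s T ∧ x t j ≤ x t i + δ / 2 := by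
    intro t
    simp only [hZ, Set.mem_iUnion, Finset.mem_compl, exists_prop]
    rfl
  have hZk : IsCompact Z := isCompact_Icc.of_isClosed_subset hZc
    (fun t ht => by obtain ⟨_, _, _, _, h, _⟩ := (hZmem t).1 ht; exact h)
  rcases Z.eq_empty_or_nonempty with hempty | hne
  · have hI : 1 ≤ ∫ u in s..T, In u := by
      refine hcut.trans (le_of_eq ?_)
      rw [cutSum, hIn, intervalIntegral.integral_finsetSum]
      · refine Finset.sum_congr rfl fun i _ => ?_
        rw [intervalIntegral.integral_finsetSum]
        exact fun j _ => ha.integrable i j s T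
      · exact fun i _ => intervalIntegrable_sum Aᶜ fun j _ => ha.integrable i j s T
    have h1 := hgrow T hsT le_rfl (fun t ht i hi j hj => by
      by_contra hcon
      have : t ∈ Z := (hZmem t).2 ⟨i, hi, j, hj, ⟨ht.1.le, ht.2.le⟩, (not_le.1 hcon).le⟩
      simp [hempty] at this)
    have h2 : K⁻¹ ^ m * (δ / 2) * 1 ≤ K⁻¹ ^ m * (δ / 2) * (∫ u in s..T, In u) :=
      mul_le_mul_of_nonneg_left hI (by positivity)
    have h3 : K⁻¹ ^ (m + 1) * (δ / 8) ≤ K⁻¹ ^ m * (δ / 2) :=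
      mul_le_mul hKm1 (by linarith) (by positivity) hKm.le
    linarith
  · obtain ⟨τ, hτZ, hτmin⟩ := hZk.exists_isLeast hne
    obtain ⟨i₀, hi₀, j₀, hj₀, hτ, hgap⟩ := (hZmem τ).1 hτZ
    refine le_trans ?_ (hmono τ T hτ.1 hτ.2 le_rfl)
    by_cases hdrop : ∃ j ∉ A, x τ j ≤ β + 3 * δ / 4
    · obtain ⟨j, hj, hxj⟩ := hdrop
      have h1 := upper_group_drop ha hx hs hτ.1 hδ.le hβ hhigh hj
      have h2 : (∫ u in s..τ, ∑ i ∈ A, ∑ j ∈ Aᶜ, a j i u) ≤ K * ∫ u in s..τ, In u := by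
        rw [← intervalIntegral.integral_const_mul]
        exact intervalIntegral.integral_mono_on hτ.1 (hOutI s τ) ((hInI s τ).const_mul K)
          (fun t ht => hbal t ⟨ht.1, ht.2.trans hτ.2⟩ A)
      have h3 : 1 / 4 ≤ K * ∫ u in s..τ, In u := by
        refine le_trans ?_ h2
        refine le_of_mul_le_mul_left (a := δ) ?_ hδ
        linarith
      have h4 := hgrow τ hτ.1 hτ.2 (fun t ht i hi j hj => by
        by_contra hcon
        have : t ∈ Z :=
          (hZmem t).2 ⟨i, hi, j, hj, ⟨ht.1.le, ht.2.le.trans hτ.2⟩, (not_le.1 hcon).le⟩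
        exact absurd (hτmin this) (not_le.2 ht.2))
      have h5 : K⁻¹ ^ (m + 1) * (δ / 8) ≤ K⁻¹ ^ m * (δ / 2) * (∫ u in s..τ, In u) := by
        have h6 : K⁻¹ * (1 / 4) ≤ ∫ u in s..τ, In u := by
          rw [inv_mul_le_iff₀ hK0]
          exact h3
        calc K⁻¹ ^ (m + 1) * (δ / 8) = K⁻¹ ^ m * (δ / 2) * (K⁻¹ * (1 / 4)) := by ring
          _ ≤ _ := mul_le_mul_of_nonneg_left h6 (by positivity)
      linarith
    · push Not at hdrop
      have h1 := lowSum_lower_of_group hK hm (γ := δ / 4)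
        (lower_bound_mono ha hx hs hτ.1 hβ) (by positivity) hA hi₀
        (by linarith [hdrop j₀ hj₀]) (fun j hj => by linarith [hdrop j hj])
      have h3 : K⁻¹ ^ (m + 1) * (δ / 8) ≤ K⁻¹ ^ m * (δ / 4) :=
        mul_le_mul hKm1 (by linarith) (by positivity) hKm.le
      linarith

/-- Over `k` consecutive intervals on which every cut accumulates influence at least `1`, the
minimum rises by at least `(1/(8n))ᵏ K⁻ᵏ δ` if all but `k` agents start `δ` above the lower bound
`β`. The induction on `k` uses one interval to pass from a low group of size `m + 1` to one of size
`r ≤ m`, at the price of a factor `K⁻⁽ᵐ⁺¹⁻ʳ⁾ / (8n)` on the height. -/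
lemma block_lower {n : ℕ} {a : Fin n → Fin n → ℝ → ℝ} {x : ℝ → Fin n → ℝ}
    (ha : IsWeight n a) (hx : IsTrajectory n a x) {K : ℝ} (hK : 1 ≤ K) {σ : ℕ → ℝ}
    (hσ0 : ∀ q, 0 ≤ σ q) (hσ : Monotone σ) {M : ℕ}
    (hbal : ∀ t ∈ Set.Icc 0 (σ M), CutBalanced K (fun i j => a i j t))
    (hcut : ∀ q, ∀ S : Finset (Fin n), S.Nonempty → S ≠ univ →
      1 ≤ cutSum n a S (σ q) (σ (q + 1)))
    (k : ℕ) (hk : k < n) :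
    ∀ q, q + k ≤ M → ∀ β δ : ℝ, 0 < δ → ∀ B : Finset (Fin n), B.card ≤ k →
      (∀ i, β ≤ x (σ q) i) → (∀ i ∉ B, β + δ ≤ x (σ q) i) →
      ∀ i, β + (1 / (8 * n) : ℝ) ^ k * K⁻¹ ^ k * δ ≤ x (σ (q + k)) i := by
  induction k using Nat.strong_induction_on with
  | _ k ih =>
  intro q hq β δ hδ B hB hβ hhigh
  have hK0 : 0 < K := by linarith
  have hn1 : (1 : ℝ) ≤ n := by exact_mod_cast (show 1 ≤ n by omega)
  set c : ℝ := 1 / (8 * n) with hc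
  have hc0 : 0 < c := by positivity
  have hc8 : c ≤ 1 / 8 := by
    rw [hc]
    exact one_div_le_one_div_of_le (by norm_num) (by linarith)
  have hKi0 : 0 < K⁻¹ := by positivity
  have hKi1 : K⁻¹ ≤ 1 := inv_le_one_of_one_le₀ hK
  rcases k with _ | m
  · intro i
    have hBe : B = ∅ := Finset.card_eq_zero.1 (by omega)
    simpa [hBe] using hhigh i (by simp [hBe])
  · by_cases hBm : B.card ≤ m
    · have h1 := ih m (by omega) (by omega) q (by omega) β δ hδ B hBm hβ hhigh
      refine lower_bound_mono ha hx (hσ0 (q + m)) (hσ (by omega)) fun i => le_trans ?_ (h1 i)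
      have h2 : c * K⁻¹ ≤ 1 := mul_le_one₀ (by linarith) hKi0.le hKi1
      have h3 : 0 ≤ c ^ m * K⁻¹ ^ m * δ := by positivity
      have h4 := mul_le_mul_of_nonneg_left h2 h3
      have h5 : c ^ (m + 1) * K⁻¹ ^ (m + 1) * δ = c ^ m * K⁻¹ ^ m * δ * (c * K⁻¹) := by ring
      linarith
    · have hBc : B.card = m + 1 := by omega
      have hBne : B.Nonempty := Finset.card_pos.1 (by omega)
      have hBuniv : B ≠ univ := by
        intro h
        rw [h, Finset.card_univ, Fintype.card_fin] at hBc
        omega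
      have hstep := one_step ha hx hK hk (hσ0 q) (hσ (Nat.le_succ q))
        (fun t ht => hbal t ⟨(hσ0 q).trans ht.1, ht.2.trans (hσ (by omega))⟩) hδ hβ hBc
        (hcut q B hBne hBuniv) hhigh
      obtain ⟨r, hr, B', hB', hh⟩ := group_of_lowSum hK hk (by positivity) hstep
      have h1 := ih r (by omega) (by omega) (q + 1) (by omega) β
        (K⁻¹ ^ (m + 1 - r) * (δ / 8 / n)) (by positivity) B' hB'
        (lower_bound_mono ha hx (hσ0 q) (hσ (Nat.le_succ q)) hβ) hh
      refine lower_bound_mono ha hx (hσ0 (q + 1 + r)) (hσ (by omega)) fun i => ?_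
      refine le_trans (add_le_add_right ?_ β) (h1 i)
      have hpow : K⁻¹ ^ (m + 1) = K⁻¹ ^ r * K⁻¹ ^ (m + 1 - r) := by
        rw [← pow_add]
        congr 1
        omega
      have hcp : c ^ (m + 1) ≤ c ^ (r + 1) :=
        pow_le_pow_of_le_one hc0.le (by linarith) (by omega)
      calc c ^ (m + 1) * K⁻¹ ^ (m + 1) * δ ≤ c ^ (r + 1) * K⁻¹ ^ (m + 1) * δ := by gcongr
        _ = c ^ r * K⁻¹ ^ r * (K⁻¹ ^ (m + 1 - r) * (δ * c)) := by rw [hpow]; ring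
        _ = _ := by
          rw [hc]
          congr 2
          field_simp

/-- The agents strictly below and those strictly above a threshold are disjoint groups, so one of
them contains at most half of the agents. -/
lemma exists_half_group {n : ℕ} (v : Fin n → ℝ) (μ : ℝ) :
    (∃ B : Finset (Fin n), B.card ≤ n / 2 ∧ ∀ i ∉ B, μ ≤ v i) ∨
      ∃ B : Finset (Fin n), B.card ≤ n / 2 ∧ ∀ i ∉ B, v i ≤ μ := by
  have hd : Disjoint (univ.filter fun i => v i < μ) (univ.filter fun i => μ < v i) := by
    rw [Finset.disjoint_filter]
    intro i _ h1 h2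
    linarith
  have hc := Finset.card_le_univ ((univ.filter fun i => v i < μ) ∪ univ.filter fun i => μ < v i)
  rw [Finset.card_union_of_disjoint hd, Fintype.card_fin] at hc
  by_cases h : (univ.filter fun i => v i < μ).card ≤ n / 2
  · exact Or.inl ⟨_, h, fun i hi => by simpa using hi⟩
  · exact Or.inr ⟨univ.filter fun i => μ < v i, by omega, fun i hi => by simpa using hi⟩

/-- Contraction of the diameter over `n / 2` intervals: `block_lower` with `k = n / 2` is applied
to `x` or to `-x`, according to which side of the midrange contains at most half of the agents. -/
lemma diam_contract {n : ℕ} (hn : 2 ≤ n) {a : Fin n → Fin n → ℝ → ℝ} {x : ℝ → Fin n → ℝ}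
    (ha : IsWeight n a) (hx : IsTrajectory n a x) {K : ℝ} (hK : 1 ≤ K) {σ : ℕ → ℝ}
    (hσ0 : ∀ q, 0 ≤ σ q) (hσ : Monotone σ)
    (hbal : ∀ t ∈ Set.Icc 0 (σ (n / 2)), CutBalanced K (fun i j => a i j t))
    (hcut : ∀ q, ∀ S : Finset (Fin n), S.Nonempty → S ≠ univ →
      1 ≤ cutSum n a S (σ q) (σ (q + 1))) :
    diam n x (σ (n / 2)) ≤ diam n x (σ 0)
      - (1 / (8 * n) : ℝ) ^ (n / 2) / 2 * (K⁻¹ ^ (n / 2) * diam n x (σ 0)) := by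
  have : Nonempty (Fin n) := ⟨⟨0, by omega⟩⟩
  have hlo : ∀ t i, (⨅ k, x t k) ≤ x t i := fun t i => ciInf_le (Set.finite_range _).bddBelow i
  have hhi : ∀ t i, x t i ≤ ⨆ k, x t k := fun t i => le_ciSup (Set.finite_range _).bddAbove i
  set L := ⨅ k, x (σ 0) k with hL
  set U := ⨆ k, x (σ 0) k with hU
  have hLU : L ≤ U := (hlo _ ⟨0, by omega⟩).trans (hhi _ ⟨0, by omega⟩)
  have hσM : σ 0 ≤ σ (n / 2) := hσ (Nat.zero_le _)
  have hlow := lower_bound_mono ha hx (hσ0 0) hσM (hlo (σ 0))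
  have hup := lower_bound_mono ha hx.neg (hσ0 0) hσM (fun i => neg_le_neg (hhi (σ 0) i))
  have hkey : ∀ l u, (∀ i, l ≤ x (σ (n / 2)) i) → (∀ i, x (σ (n / 2)) i ≤ u) →
      diam n x (σ (n / 2)) ≤ u - l := by
    intro l u h1 h2
    have h3 := le_ciInf h1
    have h4 := ciSup_le h2
    simp only [diam]
    linarith
  have hdiam : diam n x (σ 0) = U - L := rfl
  rw [hdiam]
  rcases hLU.eq_or_lt with heq | hlt
  · have := hkey L U hlow (fun i => by linarith [hup i])
    rw [heq] at this ⊢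
    simpa using this
  · have hδ : 0 < (U - L) / 2 := by linarith
    rcases exists_half_group (x (σ 0)) (L + (U - L) / 2) with ⟨B, hB, hBv⟩ | ⟨B, hB, hBv⟩
    · have h := block_lower ha hx hK hσ0 hσ hbal hcut (n / 2) (by omega) 0 (by omega) L
        ((U - L) / 2) hδ B hB (hlo (σ 0)) hBv
      rw [zero_add] at h
      have := hkey _ U h (fun i => by linarith [hup i])
      linarith
    · have h := block_lower ha hx.neg hK hσ0 hσ hbal hcut (n / 2) (by omega) 0 (by omega) (-U)
        ((U - L) / 2) hδ B hB (fun i => neg_le_neg (hhi (σ 0) i))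
        (fun i hi => by linarith [hBv i hi])
      rw [zero_add] at h
      have := hkey L (U - (1 / (8 * n) : ℝ) ^ (n / 2) * K⁻¹ ^ (n / 2) * ((U - L) / 2)) hlow
        (fun i => by linarith [h i])
      linarith

/-! ### The rescaling times -/

lemma minCut_eq_inf' {n : ℕ} (hn : 2 ≤ n) (a : Fin n → Fin n → ℝ → ℝ) :
    ∃ h : (univ.filter fun S : Finset (Fin n) => S.Nonempty ∧ S ≠ univ).Nonempty,
      ∀ t₀ t, minCut n a t₀ t = (univ.filter fun S : Finset (Fin n) => S.Nonempty ∧ S ≠ univ).inf'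
        h (fun S => cutSum n a S t₀ t) := by
  have hne : (univ.filter fun S : Finset (Fin n) => S.Nonempty ∧ S ≠ univ).Nonempty := by
    refine ⟨{⟨0, by omega⟩}, ?_⟩
    simp only [Finset.mem_filter, Finset.mem_univ, true_and, Finset.singleton_nonempty]
    intro h
    have := congrArg Finset.card h
    rw [Finset.card_singleton, Finset.card_univ, Fintype.card_fin] at this
    omega
  refine ⟨hne, fun t₀ t => ?_⟩
  rw [Finset.inf'_eq_csInf_image, minCut]
  simp

/-- On a path from outside `S` into `S`, some edge enters `S`. -/
lemma cut_edge {n : ℕ} {a : Fin n → Fin n → ℝ → ℝ} (hconn : PersistentConn n a)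
    {S : Finset (Fin n)} (hS : S.Nonempty) (hS' : S ≠ univ) :
    ∃ i ∈ S, ∃ j ∉ S, ∫⁻ s in Set.Ioi (0:ℝ), ENNReal.ofReal (a i j s) = ⊤ := by
  obtain ⟨v, hv⟩ := hS
  obtain ⟨u, hu⟩ : ∃ u, u ∉ S := by
    by_contra h
    push Not at h
    exact hS' (Finset.eq_univ_iff_forall.2 h)
  have h := hconn u v
  induction h with
  | refl => exact absurd hv hu
  | @tail b c _ hbc ih =>
    by_cases hb : b ∈ S
    · exact ih hb
    · exact ⟨c, hv, b, hb, hbc⟩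

lemma integral_unbounded {f : ℝ → ℝ} (hf : ∀ t, 0 ≤ f t)
    (hi : ∀ s t, IntervalIntegrable f volume s t)
    (htop : ∫⁻ s in Set.Ioi (0:ℝ), ENNReal.ofReal (f s) = ⊤) {t₀ : ℝ} (C : ℝ) :
    ∃ T, t₀ ≤ T ∧ C ≤ ∫ s in t₀..T, f s := by
  by_contra hcon
  push Not at hcon
  have hint : IntegrableOn f (Set.Ioi t₀) := by
    refine integrableOn_Ioi_of_intervalIntegral_norm_bounded (l := atTop) (b := id) C t₀
      (fun T => (hi t₀ T).1.mono_set subset_rfl) tendsto_id ?_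
    filter_upwards [eventually_ge_atTop t₀] with T hT
    simp only [Real.norm_of_nonneg (hf _), id]
    exact (hcon T hT).le
  have hint0 : IntegrableOn f (Set.Ioi 0) := by
    refine ((hi 0 t₀).1.union hint).mono_set ?_
    intro t ht
    by_cases h : t ≤ t₀
    · exact Or.inl ⟨ht, h⟩
    · exact Or.inr (not_le.1 h)
  have := hint0.lintegral_lt_top
  rw [htop] at this
  exact lt_irrefl _ this

lemma cutSum_mono {n : ℕ} {a : Fin n → Fin n → ℝ → ℝ} (ha : IsWeight n a)
    (S : Finset (Fin n)) {t₀ t t' : ℝ} (h0 : t₀ ≤ t) (h : t ≤ t') :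
    cutSum n a S t₀ t ≤ cutSum n a S t₀ t' := by
  refine Finset.sum_le_sum fun i _ => Finset.sum_le_sum fun j _ => ?_
  exact intervalIntegral.integral_mono_interval le_rfl h0 h
    (Filter.Eventually.of_forall fun s => (ha i j).1 s) (ha.integrable i j _ _)

lemma cutSum_unbounded {n : ℕ} {a : Fin n → Fin n → ℝ → ℝ} (ha : IsWeight n a)
    (hconn : PersistentConn n a) {S : Finset (Fin n)} (hS : S.Nonempty) (hS' : S ≠ univ)
    (t₀ : ℝ) : ∃ T, t₀ ≤ T ∧ 1 ≤ cutSum n a S t₀ T := by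
  obtain ⟨i, hi, j, hj, h⟩ := cut_edge hconn hS hS'
  obtain ⟨T, hT, hT1⟩ := integral_unbounded (ha i j).1 (ha.integrable i j) h
    (t₀ := t₀) 1
  have hnn : ∀ i j, 0 ≤ ∫ s in t₀..T, a i j s := fun i j =>
    intervalIntegral.integral_nonneg hT fun s _ => (ha i j).1 s
  refine ⟨T, hT, hT1.trans ?_⟩
  refine (Finset.single_le_sum (f := fun j => ∫ s in t₀..T, a i j s) (fun j _ => hnn i j)
    (Finset.mem_compl.2 hj)).trans ?_
  exact Finset.single_le_sum (f := fun i => ∑ j ∈ Sᶜ, ∫ s in t₀..T, a i j s)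
    (fun i _ => Finset.sum_nonneg fun j _ => hnn i j) hi

/-- The infimum defining `nextTime` is attained: `minCut` is continuous, at most `1` at `t₀`, and
eventually at least `1` by persistent connectivity. -/
lemma nextTime_spec {n : ℕ} (hn : 2 ≤ n) {a : Fin n → Fin n → ℝ → ℝ} (ha : IsWeight n a)
    (hconn : PersistentConn n a) (t₀ : ℝ) :
    t₀ ≤ nextTime n a t₀ ∧ ∀ S : Finset (Fin n), S.Nonempty → S ≠ univ →
      1 ≤ cutSum n a S t₀ (nextTime n a t₀) := by
  obtain ⟨hne, hmin⟩ := minCut_eq_inf' hn a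
  have hcont : Continuous (minCut n a t₀) := by
    have : minCut n a t₀ = fun t => (univ.filter fun S : Finset (Fin n) =>
        S.Nonempty ∧ S ≠ univ).inf' hne (fun S => cutSum n a S t₀ t) := funext (hmin t₀)
    rw [this]
    refine Continuous.finset_inf'_apply hne fun S _ => ?_
    exact continuous_finsetSum _ fun i _ => continuous_finsetSum _ fun j _ =>
      intervalIntegral.continuous_primitive (fun s t => ha.integrable i j s t) t₀
  have hstart : minCut n a t₀ t₀ ≤ 1 := by
    rw [hmin]
    obtain ⟨S, hS⟩ := hne
    refine (Finset.inf'_le _ hS).trans ?_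
    simp [cutSum]
  obtain ⟨T, hT, hT1⟩ : ∃ T, t₀ ≤ T ∧ 1 ≤ minCut n a t₀ T := by
    have hex : ∀ S : Finset (Fin n), ∃ T, t₀ ≤ T ∧
        (S.Nonempty ∧ S ≠ univ → 1 ≤ cutSum n a S t₀ T) := by
      intro S
      by_cases hS : S.Nonempty ∧ S ≠ univ
      · obtain ⟨T, hT, h⟩ := cutSum_unbounded ha hconn hS.1 hS.2 t₀
        exact ⟨T, hT, fun _ => h⟩
      · exact ⟨t₀, le_rfl, fun h => absurd h hS⟩
    choose τ hτ0 hτ using hex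
    have hle : ∀ S, τ S ≤ univ.sup' ⟨∅, Finset.mem_univ _⟩ τ :=
      fun S => Finset.le_sup' τ (Finset.mem_univ S)
    refine ⟨univ.sup' ⟨∅, Finset.mem_univ _⟩ τ, (hτ0 ∅).trans (hle ∅), ?_⟩
    rw [hmin]
    refine Finset.le_inf' _ _ fun S hS => ?_
    exact (hτ S (Finset.mem_filter.1 hS).2).trans (cutSum_mono ha S (hτ0 S) (hle S))
  have hnonempty : {t : ℝ | t₀ ≤ t ∧ minCut n a t₀ t = 1}.Nonempty := by
    obtain ⟨t, ht, h⟩ := intermediate_value_Icc hT hcont.continuousOn ⟨hstart, hT1⟩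
    exact ⟨t, ht.1, h⟩
  have hclosed : IsClosed {t : ℝ | t₀ ≤ t ∧ minCut n a t₀ t = 1} :=
    (isClosed_le continuous_const continuous_id).inter (isClosed_eq hcont continuous_const)
  obtain ⟨h1, h2⟩ := hclosed.csInf_mem hnonempty ⟨t₀, fun t ht => ht.1⟩
  refine ⟨h1, fun S hS hS' => ?_⟩
  change minCut n a t₀ (nextTime n a t₀) = 1 at h2
  rw [← h2, hmin]
  exact Finset.inf'_le _ (by simp [hS, hS'])

/-! ### The reciprocity bound -/

lemma rS_le_rbold {n : ℕ} (a : Fin n → Fin n → ℝ → ℝ) {S : Finset (Fin n)} (hS : S.Nonempty)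
    (hS' : S ≠ univ) {s t : ℝ} (hs : s ∈ Set.Icc 0 t) : rS n a S s ≤ rbold n a t :=
  (le_iSup₂_of_le (f := fun (S : Finset (Fin n))
    (_ : S ∈ {S : Finset (Fin n) | S.Nonempty ∧ S ≠ univ}) => rS n a S s)
    S ⟨hS, hS'⟩ le_rfl).trans
    (le_iSup₂_of_le (f := fun s (_ : s ∈ Set.Icc (0:ℝ) t) => rmax n a s) s hs le_rfl)

lemma cut_le_of_rS {n : ℕ} {a : Fin n → Fin n → ℝ → ℝ} (ha : IsWeight n a)
    {S : Finset (Fin n)} {s : ℝ} {R : ℝ≥0∞} (hR : R ≠ ⊤) (h : rS n a S s ≤ R) :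
    ∑ i ∈ S, ∑ j ∈ Sᶜ, a i j s ≤ R.toReal * ∑ i ∈ S, ∑ j ∈ Sᶜ, a j i s := by
  have hq : 0 ≤ ∑ i ∈ S, ∑ j ∈ Sᶜ, a j i s :=
    Finset.sum_nonneg fun i _ => Finset.sum_nonneg fun j _ => (ha j i).1 s
  rw [rS] at h
  split_ifs at h with h1 h2
  · rw [ENNReal.ofReal_le_iff_le_toReal hR, div_le_iff₀ h1] at h
    exact h
  · rw [h2]
    exact mul_nonneg ENNReal.toReal_nonneg hq
  · exact absurd (top_le_iff.1 h) hR

/-- `CutBalanced` for `S` is the bound on the ratio `rS` for the complement of `S`. -/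
lemma cutBalanced_rbold {n : ℕ} {a : Fin n → Fin n → ℝ → ℝ} (ha : IsWeight n a) {t : ℝ}
    (hfin : rbold n a t ≠ ⊤) {s : ℝ} (hs : s ∈ Set.Icc 0 t) :
    CutBalanced (rbold n a t).toReal (fun i j => a i j s) := by
  intro S
  rcases S.eq_empty_or_nonempty with rfl | hS
  · simp
  by_cases hS' : S = univ
  · simp [hS']
  have h := cut_le_of_rS ha hfin (rS_le_rbold a (S := Sᶜ)
    (Finset.nonempty_iff_ne_empty.2 (by simpa using hS'))
    (by simpa using hS.ne_empty) hs)
  rw [compl_compl, Finset.sum_comm, Finset.sum_comm (s := Sᶜ)] at h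
  exact h

/-- The ratios for `S` and its complement are inverse to each other unless both sums vanish, in
which case the ratio is `1` by convention. -/
lemma one_le_rbold {n : ℕ} (hn : 2 ≤ n) {a : Fin n → Fin n → ℝ → ℝ} (ha : IsWeight n a) {t : ℝ}
    (ht : 0 ≤ t) (hfin : rbold n a t ≠ ⊤) : 1 ≤ (rbold n a t).toReal := by
  by_contra hcon
  push Not at hcon
  have hK0 : 0 ≤ (rbold n a t).toReal := ENNReal.toReal_nonneg
  set S : Finset (Fin n) := {⟨0, by omega⟩} with hSdef
  have hS : S.Nonempty := Finset.singleton_nonempty _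
  have hS' : S ≠ univ := by
    intro h
    have := congrArg Finset.card h
    rw [Finset.card_singleton, Finset.card_univ, Fintype.card_fin] at this
    omega
  have h0 : (0 : ℝ) ∈ Set.Icc 0 t := ⟨le_rfl, ht⟩
  have h1 := cut_le_of_rS ha hfin (rS_le_rbold a hS hS' h0)
  have h2 := cutBalanced_rbold ha hfin h0 S
  have hp : 0 ≤ ∑ i ∈ S, ∑ j ∈ Sᶜ, a i j 0 :=
    Finset.sum_nonneg fun i _ => Finset.sum_nonneg fun j _ => (ha i j).1 0
  have hq : 0 ≤ ∑ i ∈ S, ∑ j ∈ Sᶜ, a j i 0 :=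
    Finset.sum_nonneg fun i _ => Finset.sum_nonneg fun j _ => (ha j i).1 0
  have hp0 : ∑ i ∈ S, ∑ j ∈ Sᶜ, a i j 0 = 0 := by nlinarith
  have hq0 : ∑ i ∈ S, ∑ j ∈ Sᶜ, a j i 0 = 0 := by
    rw [hp0, mul_zero] at h2
    exact le_antisymm h2 hq
  -- both sums vanish, so `r_S(0) = 1` by convention
  have hr : rS n a S 0 = 1 := by simp [rS, hp0, hq0]
  have h3 := rS_le_rbold a hS hS' h0
  rw [hr] at h3
  have := (ENNReal.toReal_le_toReal ENNReal.one_ne_top hfin).2 h3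
  rw [ENNReal.toReal_one] at this
  linarith

/-! ### Consensus -/

/-- A sequence contracting by factors `1 - C w` with `∑ w = ∞` has arbitrarily small terms. -/
lemma exists_diam_lt {d w : ℕ → ℝ} {C : ℝ} (hC : 0 < C) (hd : ∀ p, 0 ≤ d p) (hw : ∀ p, 0 ≤ w p)
    (hstep : ∀ p, d (p + 1) ≤ d p - C * (w (p + 1) * d p)) (hdiv : ¬ Summable w)
    {ε : ℝ} (hε : 0 < ε) : ∃ p, d p < ε := by
  by_contra hcon
  push Not at hcon
  apply hdiv
  rw [← summable_nat_add_iff 1]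
  refine summable_of_sum_range_le (c := d 0 / (C * ε)) (fun p => hw _) fun N => ?_
  have hsum : C * ε * ∑ p ∈ Finset.range N, w (p + 1) ≤ d 0 - d N := by
    induction N with
    | zero => simp
    | succ N ih =>
      rw [Finset.sum_range_succ, mul_add]
      have h1 := mul_le_mul_of_nonneg_left (hcon N) (mul_nonneg hC.le (hw (N + 1)))
      linarith [hstep N]
  rw [le_div_iff₀ (by positivity)]
  linarith [hd N]

/-- main theorem: persistent connectivity together with slow divergence
of reciprocal interaction weights implies consensus. -/
theorem stmt5 (n : ℕ) (hn : 2 ≤ n) (a : Fin n → Fin n → ℝ → ℝ) (ha : IsWeight n a)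
    (x : ℝ → Fin n → ℝ) (hx : IsTrajectory n a x)
    (hconn : PersistentConn n a)
    (hfin : ∀ t : ℝ, 0 ≤ t → rbold n a t ≠ ⊤)
    (hdiv : ∑' p : ℕ, (rbold n a (tpSeq n a p))⁻¹ ^ (n/2) = (⊤ : ℝ≥0∞)) :
    ∃ c : ℝ, ∀ i : Fin n, Tendsto (fun t => x t i) atTop (nhds c) := by
  have : Nonempty (Fin n) := ⟨⟨0, by omega⟩⟩
  have hlo : ∀ t i, (⨅ k, x t k) ≤ x t i := fun t i => ciInf_le (Set.finite_range _).bddBelow i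
  have hhi : ∀ t i, x t i ≤ ⨆ k, x t k := fun t i => le_ciSup (Set.finite_range _).bddAbove i
  have hiter : ∀ p q, 0 ≤ p → 0 ≤ (nextTime n a)^[q] p := by
    intro p q hp
    induction q with
    | zero => exact hp
    | succ q ih =>
      rw [Function.iterate_succ_apply']
      exact ih.trans (nextTime_spec hn ha hconn _).1
  have hmono : ∀ p, Monotone fun q => (nextTime n a)^[q] p := fun p =>
    monotone_nat_of_le_succ fun q => by
      rw [Function.iterate_succ_apply']
      exact (nextTime_spec hn ha hconn _).1
  have hsucc : ∀ p, tpSeq n a (p + 1) = (nextTime n a)^[n / 2] (tpSeq n a p) := fun p => by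
    simp only [tpSeq, Function.iterate_succ_apply']
  have ht0 : ∀ p, 0 ≤ tpSeq n a p := by
    intro p
    induction p with
    | zero => simp [tpSeq]
    | succ p ih =>
      rw [hsucc]
      exact hiter _ _ ih
  set K : ℕ → ℝ := fun p => (rbold n a (tpSeq n a p)).toReal with hKdef
  have hK : ∀ p, 1 ≤ K p := fun p => one_le_rbold hn ha (ht0 p) (hfin _ (ht0 p))
  have hn0 : (0 : ℝ) < n := by exact_mod_cast (show 0 < n by omega)
  have hnotsum : ¬ Summable fun p => (K p)⁻¹ ^ (n / 2) := by
    intro hsum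
    refine hsum.tsum_ofReal_ne_top ?_
    rw [← hdiv]
    refine tsum_congr fun p => ?_
    have hKp : 0 < K p := by linarith [hK p]
    rw [ENNReal.ofReal_pow (by positivity), ENNReal.ofReal_inv_of_pos hKp, hKdef,
      ENNReal.ofReal_toReal (hfin _ (ht0 p))]
  have hstep : ∀ p, diam n x (tpSeq n a (p + 1)) ≤ diam n x (tpSeq n a p) -
      (1 / (8 * n) : ℝ) ^ (n / 2) / 2 * ((K (p + 1))⁻¹ ^ (n / 2) * diam n x (tpSeq n a p)) := by
    intro p
    have h := diam_contract hn ha hx (hK (p + 1)) (σ := fun q => (nextTime n a)^[q] (tpSeq n a p))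
      (fun q => hiter _ q (ht0 p)) (hmono _)
      (fun t ht => cutBalanced_rbold ha (hfin _ (ht0 (p + 1))) (by rw [hsucc]; exact ht))
      (fun q S hS hS' => by
        simp only [Function.iterate_succ_apply']
        exact (nextTime_spec hn ha hconn _).2 S hS hS')
    rw [hsucc]
    exact h
  have hlomono : ∀ s t, 0 ≤ s → s ≤ t → (⨅ k, x s k) ≤ ⨅ k, x t k := fun s t hs hst =>
    le_ciInf (lower_bound_mono ha hx hs hst (hlo s))
  have hhimono : ∀ s t, 0 ≤ s → s ≤ t → (⨆ k, x t k) ≤ ⨆ k, x s k := fun s t hs hst =>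
    ciSup_le fun i => neg_le_neg_iff.1
      (lower_bound_mono ha hx.neg hs hst (fun i => neg_le_neg (hhi s i)) i)
  have hlohi : ∀ t, (⨅ k, x t k) ≤ ⨆ k, x t k := fun t =>
    (hlo t ⟨0, by omega⟩).trans (hhi t ⟨0, by omega⟩)
  have hdiam : Tendsto (diam n x) atTop (nhds 0) := by
    rw [Metric.tendsto_atTop]
    intro ε hε
    obtain ⟨p, hp⟩ := exists_diam_lt (d := fun p => diam n x (tpSeq n a p))
      (w := fun p => (K p)⁻¹ ^ (n / 2)) (C := (1 / (8 * n) : ℝ) ^ (n / 2) / 2) (by positivity)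
      (fun p => sub_nonneg.2 (hlohi _))
      (fun p => pow_nonneg (inv_nonneg.2 (by linarith [hK p])) _) hstep hnotsum hε
    refine ⟨tpSeq n a p, fun t ht => ?_⟩
    have h1 := hlomono _ t (ht0 p) ht
    have h2 := hhimono _ t (ht0 p) ht
    simp only [diam] at hp ⊢
    rw [Real.dist_eq, sub_zero, abs_of_nonneg (sub_nonneg.2 (hlohi t))]
    linarith
  -- freezing negative times at `0` makes the minimum monotone on all of `ℝ`
  have hM : Monotone fun t : ℝ => ⨅ k, x (max t 0) k := fun s t hst =>
    hlomono _ _ (le_max_right _ _) (max_le_max_right 0 hst)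
  have hbdd : BddAbove (Set.range fun t : ℝ => ⨅ k, x (max t 0) k) := by
    refine ⟨⨆ k, x 0 k, ?_⟩
    rintro _ ⟨t, rfl⟩
    exact (hlohi _).trans (hhimono 0 _ le_rfl (le_max_right _ _))
  have hlim := tendsto_atTop_ciSup hM hbdd
  refine ⟨⨆ t : ℝ, ⨅ k, x (max t 0) k, fun i => ?_⟩
  have hlim' : Tendsto (fun t : ℝ => ⨅ k, x t k) atTop
      (nhds (⨆ t : ℝ, ⨅ k, x (max t 0) k)) := by
    refine hlim.congr' ?_
    filter_upwards [eventually_ge_atTop 0] with t ht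
    rw [max_eq_left ht]
  have hlim2 := hlim'.add hdiam
  rw [add_zero] at hlim2
  refine tendsto_of_tendsto_of_tendsto_of_le_of_le hlim' hlim2 (fun t => hlo t i) (fun t => ?_)
  have := hhi t i
  simp only [diam]
  linarith
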